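/- arXiv:2002.01178 — 3 statements merged into one kernel-verified Lean document; each statement's English description precedes it below -/
import Mathlib

section
/- Let s_1 and s_2 be binary strings with ℓ_1 := |s̃_1| < ℓ_2 := |s̃_2|. Then for every condensed binary string x with ℓ_1 ≤ |x| < ℓ_2 it holds that dtw(s_1, x)² + dtw(s_2, x)² ≥ dtw(s_1, s̃_2)². -/
/-- One step of a warping path: move down, right, or diagonally. -/
def wpStep (a b : ℕ × ℕ) : Prop :=
  (b.1 = a.1 + 1 ∧ b.2 = a.2) ∨ (b.1 = a.1 ∧ b.2 = a.2 + 1) ∨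
    (b.1 = a.1 + 1 ∧ b.2 = a.2 + 1)

/-- A warping path of order `m × n` (0-based indices). -/
def IsWarpingPath (m n : ℕ) (p : List (ℕ × ℕ)) : Prop :=
  p.head? = some (0, 0) ∧ p.getLast? = some (m - 1, n - 1) ∧
    List.Chain' wpStep p ∧ ∀ q ∈ p, q.1 < m ∧ q.2 < n

/-- The cost of aligning binary strings `x` and `y` along path `p`:
the number of aligned mismatching pairs (for binary symbols,
`(x[i] - y[j])^2` is `0` if the symbols agree and `1` otherwise). -/
def pathCost (x y : List Bool) (p : List (ℕ × ℕ)) : ℕ :=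
  (p.map fun q => if x.getD q.1 false = y.getD q.2 false then 0 else 1).sum

/-- The squared dynamic time warping distance `dtw(x,y)²` of two binary strings. -/
noncomputable def dtwSq (x y : List Bool) : ℕ :=
  sInf {c | ∃ p, IsWarpingPath x.length y.length p ∧ pathCost x y p = c}

/-- The dynamic time warping distance `dtw(x,y)`. -/
noncomputable def dtw (x y : List Bool) : ℝ :=
  Real.sqrt (dtwSq x y)

/-- The condensation of a binary string: collapse every maximal run of equal
consecutive symbols to a single symbol. -/
def condense : List Bool → List Bool
  | [] => []
  | [a] => [a]
  | a :: b :: rest => if a = b then condense (b :: rest) else a :: condense (b :: rest)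

/-- Auxiliary function collecting the block sizes of a binary string. -/
def blockSizesAux : Bool → ℕ → List Bool → List ℕ
  | _, cnt, [] => [cnt]
  | cur, cnt, a :: rest =>
      if a = cur then blockSizesAux cur (cnt + 1) rest
      else cnt :: blockSizesAux a 1 rest

/-- The list of block sizes of a binary string (sizes of the maximal runs
of equal consecutive symbols, from left to right). -/
def blockSizes : List Bool → List ℕ
  | [] => []
  | a :: rest => blockSizesAux a 1 rest

/-- The objective `F(z) = Σᵢ dtw(sᵢ, z)²`. -/
noncomputable def Fobj (ss : List (List Bool)) (z : List Bool) : ℕ :=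
  (ss.map fun s => dtwSq s z).sum

/-- `z` is a mean of the strings `ss`: a nonempty binary string minimizing
`F` among all nonempty binary strings. -/
def IsMean (ss : List (List Bool)) (z : List Bool) : Prop :=
  z ≠ [] ∧ ∀ w : List Bool, w ≠ [] → Fobj ss z ≤ Fobj ss w

/-- The optimal value of a Min 1-Separated Sum instance with integers `b`
(1-based indexing) and selection size `r`: minimize the sum of `r` selected
integers, no two of which are consecutive. -/
noncomputable def mssValue (b : List ℕ) (r : ℕ) : ℕ :=
  sInf {s | ∃ I : List ℕ, I.length = r ∧ (∀ i ∈ I, 1 ≤ i ∧ i ≤ b.length) ∧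
    List.Chain' (fun a c => a + 2 ≤ c) I ∧
    (I.map fun i => b.getD (i - 1) 0).sum = s}

def mm (a b : Bool) : ℕ := if a = b then 0 else 1

theorem mm_self (a : Bool) : mm a a = 0 := by simp [mm]

theorem mm_ne {a b : Bool} (h : a ≠ b) : mm a b = 1 := by simp [mm, h]

theorem mm_tf : mm true false = 1 := rfl

theorem mm_ft : mm false true = 1 := rfl

def lst : List Bool → Bool
  | [] => false
  | [a] => a
  | _ :: b :: t => lst (b :: t)

inductive Al : List Bool → List Bool → ℕ → Prop
  | single (a b : Bool) : Al [a] [b] (mm a b)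
  | down (a a' b : Bool) (x y : List Bool) (c : ℕ) :
      Al (a' :: x) (b :: y) c → Al (a :: a' :: x) (b :: y) (mm a b + c)
  | right (a b b' : Bool) (x y : List Bool) (c : ℕ) :
      Al (a :: x) (b' :: y) c → Al (a :: x) (b :: b' :: y) (mm a b + c)
  | diag (a a' b b' : Bool) (x y : List Bool) (c : ℕ) :
      Al (a' :: x) (b' :: y) c → Al (a :: a' :: x) (b :: b' :: y) (mm a b + c)

theorem Al.lower {u v : List Bool} {c : ℕ} (h : Al u v c) :
    (condense v).length + mm (u.headD false) (v.headD false) + mm (lst u) (lst v)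
      ≤ 2 * c + (condense u).length := by
  induction h with
  | single a b => simp [condense, lst]; omega
  | down a a' b x y c h ih =>
    cases a <;> cases a' <;> cases b <;> simp [condense, lst, mm_self, mm_tf, mm_ft] at ih ⊢ <;> omega
  | right a b b' x y c h ih =>
    cases a <;> cases b' <;> cases b <;> simp [condense, lst, mm_self, mm_tf, mm_ft] at ih ⊢ <;> omega
  | diag a a' b b' x y c h ih =>
    cases a <;> cases a' <;> cases b <;> cases b' <;> simp [condense, lst, mm_self, mm_tf, mm_ft] at ih ⊢ <;> omega

theorem mm_comm (a b : Bool) : mm a b = mm b a := by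
  cases a <;> cases b <;> rfl

theorem Al.swap {u v : List Bool} {c : ℕ} (h : Al u v c) : Al v u c := by
  induction h with
  | single a b => rw [mm_comm]; exact Al.single _ _
  | down a a' b x y c h ih => rw [mm_comm]; exact Al.right _ _ _ _ _ _ ih
  | right a b b' x y c h ih => rw [mm_comm]; exact Al.down _ _ _ _ _ _ ih
  | diag a a' b b' x y c h ih => rw [mm_comm]; exact Al.diag _ _ _ _ _ _ _ ih

theorem Al.base (a : Bool) : ∀ (b : Bool) (y : List Bool), List.IsChain (· ≠ ·) (b :: y) →
    ∃ c, Al [a] (b :: y) c ∧ 2 * c + 1 ≤ (b :: y).length + mm a b + mm a (lst (b :: y))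
  | b, [], _ => ⟨_, Al.single a b, by simp [lst]; omega⟩
  | b, b' :: y, h => by
    rw [List.isChain_cons_cons] at h
    obtain ⟨c, hc, hle⟩ := Al.base a b' y h.2
    refine ⟨_, Al.right a b b' [] y c hc, ?_⟩
    have := h.1
    cases a <;> cases b <;> cases b' <;> simp [lst, mm_self, mm_tf, mm_ft] at * <;> omega

theorem Al.same : ∀ (a : Bool) (x y : List Bool), List.IsChain (· ≠ ·) (a :: y) →
    (condense (a :: x)).length ≤ (a :: y).length →
    ∃ c, Al (a :: x) (a :: y) c ∧
      2 * c + (condense (a :: x)).length ≤ (a :: y).length + mm (lst (a :: x)) (lst (a :: y))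
  | a, [], y, h, hl => by
    obtain ⟨c, hc, hle⟩ := Al.base a a y h
    exact ⟨c, hc, by simpa [condense, lst, mm_self, mm_tf, mm_ft] using hle⟩
  | a, a' :: x, y, h, hl => by
    by_cases e : a = a'
    · subst e
      obtain ⟨c, hc, hle⟩ := Al.same a x y h (by simpa [condense] using hl)
      exact ⟨_, Al.down a a a x y c hc, by simpa [condense, lst, mm_self, mm_tf, mm_ft] using hle⟩
    · cases y with
      | nil =>
        exfalso
        have : 0 < (condense (a' :: x)).length := by
          clear hl h e a
          induction x generalizing a' with
          | nil => simp [condense]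
          | cons b x ih => have := ih b; unfold condense; split_ifs <;> simp_all
        simp [condense, e] at hl
        simp [hl] at this
      | cons b y =>
        rw [List.isChain_cons_cons] at h
        have hb : b = a' := by
          have := h.1
          cases a <;> cases b <;> cases a' <;> simp_all
        subst hb
        obtain ⟨c, hc, hle⟩ := Al.same b x y h.2 (by simpa [condense, e] using hl)
        refine ⟨_, Al.diag a b a b x y c hc, ?_⟩
        simp [condense, lst, mm_self, mm_tf, mm_ft, e] at hle ⊢
        omega

theorem Al.upper (a b : Bool) (x y : List Bool) (h : List.IsChain (· ≠ ·) (b :: y))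
    (hl : (condense (a :: x)).length < (b :: y).length) :
    ∃ c, Al (a :: x) (b :: y) c ∧
      2 * c + (condense (a :: x)).length
        ≤ (b :: y).length + mm a b + mm (lst (a :: x)) (lst (b :: y)) := by
  by_cases e : a = b
  · subst e
    obtain ⟨c, hc, hle⟩ := Al.same a x y h hl.le
    exact ⟨c, hc, by omega⟩
  · cases y with
    | nil =>
      obtain ⟨c, hc⟩ : ∃ l, l = condense (a :: x) := ⟨_, rfl⟩
      exfalso
      have : 0 < (condense (a :: x)).length := by
        clear hl hc e
        induction x generalizing a with
        | nil => simp [condense]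
        | cons b x ih => have := ih b; unfold condense; split_ifs <;> simp_all
      simp at hl
      simp [hl] at this
    | cons b' y =>
      rw [List.isChain_cons_cons] at h
      have hb : b' = a := by
        have := h.1
        cases a <;> cases b <;> cases b' <;> simp_all
      subst hb
      obtain ⟨c, hc, hle⟩ := Al.same b' x y h.2 (by simp at hl ⊢; omega)
      refine ⟨_, Al.right b' b b' x y c hc, ?_⟩
      simp [lst, mm_self, mm_ne e, mm_ne (Ne.symm e)] at hle ⊢
      omega

theorem Al.exists (a b : Bool) (x y : List Bool) : ∃ c, Al (a :: x) (b :: y) c := by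
  induction x generalizing a with
  | nil =>
    induction y generalizing b with
    | nil => exact ⟨_, Al.single a b⟩
    | cons b' y ih => obtain ⟨c, hc⟩ := ih b'; exact ⟨_, Al.right _ _ _ _ _ _ hc⟩
  | cons a' x ih => obtain ⟨c, hc⟩ := ih a'; exact ⟨_, Al.down _ _ _ _ _ _ hc⟩

theorem drop_info {x t : List Bool} {a : Bool} {i : ℕ} (h : a :: t = x.drop i) :
    x.getD i false = a ∧ x.drop (i + 1) = t ∧ x.length = i + 1 + t.length := by
  have h1 : (x.drop i).length = t.length + 1 := by rw [← h]; simp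
  have h2 : i < x.length := by simp at h1; omega
  have h3 := List.drop_eq_getElem_cons h2
  rw [← h] at h3
  injection h3 with h4 h5
  refine ⟨by simp [h2, h4], h5.symm, ?_⟩
  simp at h1; omega

theorem Al.path {u v : List Bool} {c : ℕ} (h : Al u v c) (x y : List Bool) :
    ∀ i j, u = x.drop i → v = y.drop j →
    ∃ p : List (ℕ × ℕ), List.IsChain wpStep ((i, j) :: p) ∧
      ((i, j) :: p).getLast? = some (x.length - 1, y.length - 1) ∧
      (∀ q ∈ (i, j) :: p, q.1 < x.length ∧ q.2 < y.length) ∧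
      pathCost x y ((i, j) :: p) = c := by
  induction h with
  | single a b =>
    intro i j hu hv
    obtain ⟨a1, a2, a3⟩ := drop_info hu
    obtain ⟨b1, b2, b3⟩ := drop_info hv
    refine ⟨[], by simp, by simp [a3, b3], by simp [a3, b3], ?_⟩
    simp only [pathCost, List.map_cons, a1, b1]
    simp [mm]
  | down a a' b u v c h ih =>
    intro i j hu hv
    obtain ⟨a1, a2, a3⟩ := drop_info hu
    obtain ⟨b1, b2, b3⟩ := drop_info hv
    obtain ⟨p, p1, p2, p3, p4⟩ := ih (i + 1) j a2.symm hv
    refine ⟨_ :: p, List.isChain_cons_cons.2 ⟨by simp [wpStep], p1⟩, ?_, ?_, ?_⟩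
    · rw [List.getLast?_cons_cons]; exact p2
    · intro q hq
      rcases List.mem_cons.1 hq with rfl | hq
      · constructor <;> simp only <;> omega
      · exact p3 q hq
    · rw [← p4]
      simp only [pathCost, List.map_cons, List.sum_cons, a1, b1, mm]
  | right a b b' u v c h ih =>
    intro i j hu hv
    obtain ⟨a1, a2, a3⟩ := drop_info hu
    obtain ⟨b1, b2, b3⟩ := drop_info hv
    obtain ⟨p, p1, p2, p3, p4⟩ := ih i (j + 1) hu b2.symm
    refine ⟨_ :: p, List.isChain_cons_cons.2 ⟨by simp [wpStep], p1⟩, ?_, ?_, ?_⟩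
    · rw [List.getLast?_cons_cons]; exact p2
    · intro q hq
      rcases List.mem_cons.1 hq with rfl | hq
      · constructor <;> simp only <;> omega
      · exact p3 q hq
    · rw [← p4]
      simp only [pathCost, List.map_cons, List.sum_cons, a1, b1, mm]
  | diag a a' b b' u v c h ih =>
    intro i j hu hv
    obtain ⟨a1, a2, a3⟩ := drop_info hu
    obtain ⟨b1, b2, b3⟩ := drop_info hv
    obtain ⟨p, p1, p2, p3, p4⟩ := ih (i + 1) (j + 1) a2.symm b2.symm
    refine ⟨_ :: p, List.isChain_cons_cons.2 ⟨by simp [wpStep], p1⟩, ?_, ?_, ?_⟩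
    · rw [List.getLast?_cons_cons]; exact p2
    · intro q hq
      rcases List.mem_cons.1 hq with rfl | hq
      · constructor <;> simp only <;> omega
      · exact p3 q hq
    · rw [← p4]
      simp only [pathCost, List.map_cons, List.sum_cons, a1, b1, mm]

theorem drop_ex {x : List Bool} {i : ℕ} (h : i < x.length) :
    x.drop i = x.getD i false :: x.drop (i + 1) := by
  rw [List.drop_eq_getElem_cons h]; simp [h]

theorem Al.of_path (x y : List Bool) : ∀ (p : List (ℕ × ℕ)) (i j : ℕ),
    List.IsChain wpStep ((i, j) :: p) →
      ((i, j) :: p).getLast? = some (x.length - 1, y.length - 1) →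
      (∀ q ∈ (i, j) :: p, q.1 < x.length ∧ q.2 < y.length) →
      Al (x.drop i) (y.drop j) (pathCost x y ((i, j) :: p)) := by
  intro p
  induction p with
  | nil =>
    intro i j h1 h2 h3
    have h4 := h3 (i, j) (by simp)
    simp at h2 h4
    rw [drop_ex h4.1, drop_ex h4.2, List.drop_eq_nil_of_le (by omega),
      List.drop_eq_nil_of_le (by omega)]
    simpa only [pathCost, mm, List.map_cons, List.map_nil, List.sum_cons, List.sum_nil,
      Nat.add_zero] using Al.single (x.getD i false) (y.getD j false)
  | cons r p ih =>
    obtain ⟨k, l⟩ := r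
    intro i j h1 h2 h3
    have h4 := h3 (i, j) (by simp)
    have h5 := h3 (k, l) (by simp)
    rw [List.isChain_cons_cons] at h1
    rw [List.getLast?_cons_cons] at h2
    have ih' := ih k l h1.2 h2 (fun q hq => h3 q (List.mem_cons_of_mem _ hq))
    have hcost : pathCost x y ((i, j) :: (k, l) :: p)
      = mm (x.getD i false) (y.getD j false) + pathCost x y ((k, l) :: p) := by
      simp only [pathCost, mm, List.map_cons, List.sum_cons]
    rw [hcost]
    simp only at h4 h5
    rcases h1.1 with ⟨e1, e2⟩ | ⟨e1, e2⟩ | ⟨e1, e2⟩ <;> simp only at e1 e2 <;> subst e1 <;> subst e2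
    · rw [drop_ex h5.1, drop_ex h5.2] at ih'
      rw [drop_ex h4.1, drop_ex h4.2, drop_ex h5.1]
      exact Al.down _ _ _ _ _ _ ih'
    · rw [drop_ex h5.1, drop_ex h5.2] at ih'
      rw [drop_ex h4.1, drop_ex h4.2, drop_ex h5.2]
      exact Al.right _ _ _ _ _ _ ih'
    · rw [drop_ex h5.1, drop_ex h5.2] at ih'
      rw [drop_ex h4.1, drop_ex h4.2, drop_ex h5.1, drop_ex h5.2]
      exact Al.diag _ _ _ _ _ _ _ ih'

theorem Al.mem {x y : List Bool} {c : ℕ} (h : Al x y c) :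
    c ∈ {c | ∃ p, IsWarpingPath x.length y.length p ∧ pathCost x y p = c} := by
  obtain ⟨p, h1, h2, h3, h4⟩ := h.path x y 0 0 (by simp) (by simp)
  exact ⟨_, ⟨by simp, h2, h1, h3⟩, h4⟩

theorem dtwSq_le {x y : List Bool} {c : ℕ} (h : Al x y c) : dtwSq x y ≤ c :=
  Nat.sInf_le h.mem

theorem Al.dtwSq {x y : List Bool} (hx : x ≠ []) (hy : y ≠ []) : Al x y (dtwSq x y) := by
  obtain ⟨a, x', rfl⟩ := List.exists_cons_of_ne_nil hx
  obtain ⟨b, y', rfl⟩ := List.exists_cons_of_ne_nil hy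
  obtain ⟨c, hc⟩ := Al.exists a b x' y'
  obtain ⟨p, ⟨h1, h2, h3, h4⟩, h5⟩ := Nat.sInf_mem (Set.nonempty_of_mem hc.mem)
  unfold _root_.dtwSq
  rw [← h5]
  cases p with
  | nil => simp at h1
  | cons q p =>
    simp at h1
    subst h1
    exact Al.of_path _ _ p 0 0 h3 h2 h4

theorem condense_of_chain (x : List Bool) (h : List.IsChain (· ≠ ·) x) : condense x = x := by
  induction x with
  | nil => rfl
  | cons a x ih =>
    cases x with
    | nil => rfl
    | cons b x =>
      rw [List.isChain_cons_cons] at h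
      simp [condense, h.1, ih h.2]

theorem condense_info (a : Bool) (x : List Bool) :
    ∃ y, condense (a :: x) = a :: y ∧ List.IsChain (· ≠ ·) (a :: y) ∧
      lst (a :: y) = lst (a :: x) := by
  induction x generalizing a with
  | nil => exact ⟨[], by simp [condense]⟩
  | cons b x ih =>
    obtain ⟨y, h1, h2, h3⟩ := ih b
    by_cases e : a = b
    · subst e
      exact ⟨y, by simp [condense, h1], h2, by simp [lst, h3]⟩
    · exact ⟨b :: y, by simp [condense, h1, e], List.isChain_cons_cons.2 ⟨e, h2⟩,
        by simp [lst, h3]⟩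

theorem mm_tri (a b c : Bool) : mm a c ≤ mm a b + mm c b := by
  cases a <;> cases b <;> cases c <;> simp [mm]

/-- if `ℓ₁ = |s̃₁| < ℓ₂ = |s̃₂|`, then every condensed string `x`
with `ℓ₁ ≤ |x| < ℓ₂` satisfies `dtw(s₁,x)² + dtw(s₂,x)² ≥ dtw(s₁, s̃₂)²`. -/
theorem middle_length_candidates_bound (s1 s2 : List Bool)
    (h1 : s1 ≠ []) (h2 : s2 ≠ [])
    (hlt : (condense s1).length < (condense s2).length)
    (x : List Bool) (hc : List.Chain' (· ≠ ·) x)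
    (hge : (condense s1).length ≤ x.length)
    (hlt2 : x.length < (condense s2).length) :
    dtwSq s1 (condense s2) ≤ dtwSq s1 x + dtwSq s2 x := by
  obtain ⟨a, s1, rfl⟩ := List.exists_cons_of_ne_nil h1
  obtain ⟨b, s2, rfl⟩ := List.exists_cons_of_ne_nil h2
  obtain ⟨z, e1, -, -⟩ := condense_info a s1
  have hx : x ≠ [] := by
    rintro rfl
    simp [e1] at hge
  obtain ⟨w, f1, f2, f3⟩ := condense_info b s2
  obtain ⟨c, hc1, hc2⟩ := Al.upper a b s1 w f2 (by rw [← f1]; exact hlt)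
  have k1 := (Al.dtwSq h1 hx).lower
  have k2 := (Al.dtwSq h2 hx).swap.lower
  rw [condense_of_chain x hc] at k1
  have k3 := dtwSq_le hc1
  rw [f1] at *
  have t1 := mm_tri a (x.headD false) b
  have t2 := mm_tri (lst (a :: s1)) (lst x) (lst (b :: s2))
  rw [condense_of_chain x hc] at k2
  rw [f3] at hc2
  simp only [List.headD_cons, mm_comm (x.headD false), mm_comm (lst x)] at k1 k2
  omega
end

section
/- Let s_1, s_2, s_3 be binary strings with s_1[1] = s_2[1] = s_3[1], s_1[−1] = s_2[−1] = s_3[−1], and condensation lengths ℓ_1 := |s̃_1| ≤ ℓ_2 := |s̃_2| ≤ ℓ_3 := |s̃_3|. Then every condensed mean of s_1, s_2, s_3 has length at least ℓ_2. -/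
def chg (y : ℕ → Bool) (T : ℕ) : ℕ := ∑ i ∈ Finset.range T, if y i = y (i+1) then 0 else 1

def hdc (x y : ℕ → Bool) (T : ℕ) : ℕ := ∑ i ∈ Finset.range (T+1), if x i = y i then 0 else 1

theorem chg_succ (y : ℕ → Bool) (T : ℕ) :
    chg y (T+1) = chg y T + if y T = y (T+1) then 0 else 1 := by
  simp [chg, Finset.sum_range_succ]

theorem hdc_succ (x y : ℕ → Bool) (T : ℕ) :
    hdc x y (T+1) = hdc x y T + if x (T+1) = y (T+1) then 0 else 1 := by
  simp [hdc, Finset.sum_range_succ]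

theorem chg_congr (x y : ℕ → Bool) (T : ℕ) (h : ∀ t ≤ T, x t = y t) : chg x T = chg y T := by
  unfold chg
  apply Finset.sum_congr rfl
  intro i hi
  have := Finset.mem_range.1 hi
  rw [h i (by omega), h (i+1) (by omega)]

theorem chg_parity (y : ℕ → Bool) (T : ℕ) :
    (chg y T) % 2 = if y 0 = y T then 0 else 1 := by
  induction T with
  | zero => simp [chg]
  | succ T ih =>
    rw [chg_succ]
    cases h0 : y 0 <;> cases h1 : y T <;> cases h2 : y (T+1) <;> simp_all <;> omega

theorem chg_flip (x y : ℕ → Bool) (k : ℕ) (h : ∀ t, t ≠ k → x t = y t) (T : ℕ) :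
    chg x T ≤ chg y T + (if k ≠ 0 ∧ k ≤ T then 1 else 0) + (if k < T then 1 else 0) := by
  induction T with
  | zero => simp [chg]
  | succ T ih =>
    rw [chg_succ, chg_succ]
    by_cases h1 : T = k
    · subst h1
      have a1 : (if x T = x (T+1) then 0 else 1) ≤ 1 := by split <;> omega
      simp at ih ⊢
      split_ifs at * <;> omega
    · by_cases h2 : T + 1 = k
      · subst h2
        have a1 : (if x T = x (T+1) then 0 else 1) ≤ 1 := by split <;> omega
        simp at ih ⊢
        split_ifs at * <;> omega
      · rw [h T h1, h (T+1) h2]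
        split_ifs at * <;> omega

theorem chg_ivt (x y : ℕ → Bool) (T n : ℕ) (h0 : x 0 = y 0) (hT : x T = y T)
    (hy : chg y T ≤ n) (hx : n ≤ chg x T) (hp : n % 2 = chg y T % 2) :
    ∃ w : ℕ → Bool, (∀ t, w t = x t ∨ w t = y t) ∧ chg w T = n := by
  classical
  let g : ℕ → ℕ → Bool := fun k t => if t < k then x t else y t
  have hg : ∀ k t, g k t = x t ∨ g k t = y t := by
    intro k t; by_cases h : t < k <;> simp [g, h]
  have hpar : ∀ k, chg (g k) T % 2 = n % 2 := by
    intro k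
    rw [hp, chg_parity, chg_parity]
    have e0 : g k 0 = y 0 := by rcases hg k 0 with h | h <;> simp [h, h0]
    have eT : g k T = y T := by rcases hg k T with h | h <;> simp [h, hT]
    rw [e0, eT]
  have hex : ∃ k, n ≤ chg (g k) T := by
    refine ⟨T+1, ?_⟩
    rw [chg_congr (g (T+1)) x T (fun t ht => by simp [g]; omega)]
    exact hx
  have hspec := Nat.find_spec hex
  have hmin := fun m => Nat.find_min hex (m := m)
  generalize Nat.find hex = k at hspec hmin
  refine ⟨g k, hg k, ?_⟩
  cases k with
  | zero =>
    have : g 0 = y := by funext t; simp [g]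
    rw [this] at hspec ⊢
    omega
  | succ k =>
    have h1 := hmin k (by omega)
    have h2 := hpar k
    have h3 := hpar (k+1)
    have h4 := chg_flip (g (k+1)) (g k) k (by
      intro t ht
      have : t < k + 1 ↔ t < k := by omega
      simp [g, this]) T
    split_ifs at h4 <;> omega

theorem hdc_le (x y w : ℕ → Bool) (T : ℕ) (h : ∀ t, w t = x t ∨ w t = y t) :
    hdc x w T ≤ hdc x y T := by
  apply Finset.sum_le_sum
  intro i _
  rcases h i with h | h <;> simp [h]

theorem hdc_lt (x y w : ℕ → Bool) (T : ℕ) (h : ∀ t, w t = x t ∨ w t = y t)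
    (k : ℕ) (hk : k ≤ T) (hne : w k ≠ y k) :
    hdc x w T < hdc x y T := by
  apply Finset.sum_lt_sum
  · intro i _
    rcases h i with h | h <;> simp [h]
  · refine ⟨k, Finset.mem_range.2 (by omega), ?_⟩
    rcases h k with h | h
    · rw [h] at hne
      simp [h, hne]
    · exact absurd h hne

def Walk (u : ℕ → ℕ) (T : ℕ) : Prop :=
  u 0 = 0 ∧ ∀ t < T, u (t+1) = u t ∨ u (t+1) = u t + 1

def sf (s : List Bool) (i : ℕ) : Bool := s.getD i false

def PP (s : List Bool) (a : Bool) (n c : ℕ) : Prop :=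
  ∃ (T : ℕ) (u : ℕ → ℕ) (y : ℕ → Bool), Walk u T ∧ u T = s.length - 1 ∧ y 0 = a ∧
    chg y T = n ∧ hdc (fun t => sf s (u t)) y T = c

theorem walk_chg (f : ℕ → Bool) (u : ℕ → ℕ) (T : ℕ) (h : Walk u T) :
    chg (fun t => f (u t)) T = chg f (u T) := by
  induction T with
  | zero => simp [chg, h.1]
  | succ T ih =>
    have ih := ih ⟨h.1, fun t ht => h.2 t (by omega)⟩
    rw [chg_succ, ih]
    rcases h.2 T (by omega) with e | e
    · simp [e]
    · rw [e, chg_succ]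

def endb (a : Bool) (n : ℕ) : Bool := xor a (decide (n % 2 = 1))

theorem endb_eq (y : ℕ → Bool) (T : ℕ) : endb (y 0) (chg y T) = y T := by
  have := chg_parity y T
  unfold endb
  rw [this]
  cases y 0 <;> cases y T <;> simp

theorem PP_append (s : List Bool) (a : Bool) (n c : ℕ) (h : PP s a n c) :
    PP s a (n+1) (c + if sf s (s.length - 1) = endb a (n+1) then 0 else 1) := by
  obtain ⟨T, u, y, hu, huT, hy, hn, hc⟩ := h
  have e1 := endb_eq y T
  have e2 : endb a (n+1) = ! y T := by
    rw [← e1, hy, hn]; unfold endb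
    rcases Nat.mod_two_eq_zero_or_one n with h | h
    · have : (n+1) % 2 = 1 := by omega
      simp [h, this]
    · have : (n+1) % 2 = 0 := by omega
      simp [h, this]
  refine ⟨T+1, fun t => u (min t T), fun t => if t ≤ T then y t else ! y T, ⟨?_, ?_⟩, ?_, ?_, ?_, ?_⟩
  · simp [hu.1]
  · intro t ht
    by_cases h : t < T
    · have h1 : min (t+1) T = t+1 := by omega
      have h2 : min t T = t := by omega
      simp only [h1, h2]; exact hu.2 t h
    · have h1 : min (t+1) T = T := by omega
      have h2 : min t T = T := by omega
      simp only [h1, h2]; left; trivial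
  · simp [huT]
  · simp [hy]
  · rw [chg_succ, chg_congr _ y T (fun t ht => by simp [ht]), hn]
    simp
  · rw [hdc_succ, e2]
    simp only [← huT]
    have : hdc (fun t => sf s (u (min t T))) (fun t => if t ≤ T then y t else !y T) T = c := by
      rw [← hc]
      unfold hdc
      apply Finset.sum_congr rfl
      intro i hi
      have := Finset.mem_range.1 hi
      have h1 : min i T = i := by omega
      have h2 : i ≤ T := by omega
      simp [h1, h2]
    rw [this]
    simp

theorem PP_prepend (s : List Bool) (a : Bool) (n c : ℕ) (h : PP s (!a) n c) (hs : sf s 0 = a) :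
    PP s a (n+1) c := by
  obtain ⟨T, u, y, hu, huT, hy, hn, hc⟩ := h
  refine ⟨T+1, fun t => u (t-1), fun t => if t = 0 then a else y (t-1), ⟨?_, ?_⟩, ?_, ?_, ?_, ?_⟩
  · simp [hu.1]
  · intro t ht
    cases t with
    | zero => simp
    | succ t => simpa using hu.2 t (by omega)
  · simp [huT]
  · simp
  · rw [← hn]
    unfold chg
    rw [Finset.sum_range_succ']
    simp [hy]
  · rw [← hc]
    unfold hdc
    rw [Finset.sum_range_succ']
    simp [hs, hu.1]

theorem PP_core (s : List Bool) (n : ℕ) (T : ℕ) (u : ℕ → ℕ) (y y0 x0 : ℕ → Bool)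
    (hu : Walk u T) (huT : u T = s.length - 1)
    (hy0 : ∀ t, y0 t = sf s (u t) ∨ y0 t = y t)
    (hx0 : ∀ t, x0 t = sf s (u t) ∨ x0 t = y t)
    (e0 : x0 0 = y0 0) (eT : x0 T = y0 T)
    (h1 : chg y0 T ≤ n) (h2 : n ≤ chg x0 T) (hp : n % 2 = chg y0 T % 2) (hne : chg y T ≠ n) :
    ∃ c' < hdc (fun t => sf s (u t)) y T, PP s (y0 0) n c' := by
  obtain ⟨w, hw, hwn⟩ := chg_ivt x0 y0 T n e0 eT h1 h2 hp
  have hw' : ∀ t, w t = sf s (u t) ∨ w t = y t := by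
    intro t
    rcases hw t with h | h <;> rw [h]
    · exact hx0 t
    · exact hy0 t
  have : ∃ k ≤ T, w k ≠ y k := by
    by_contra! hcon
    exact hne ((chg_congr w y T hcon).symm.trans hwn)
  obtain ⟨k, hk, hk'⟩ := this
  refine ⟨_, hdc_lt _ y w T hw' k hk hk', T, u, w, hu, huT, ?_, hwn, rfl⟩
  rcases hw 0 with h | h <;> simp [h, e0]

theorem PP_i (s : List Bool) (a : Bool) (n c : ℕ) (h : PP s a n c) (hs : sf s 0 = a)
    (hl : sf s (s.length - 1) = endb a n) (hn : n + 2 ≤ chg (sf s) (s.length - 1)) :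
    ∃ c' < c, PP s a (n+2) c' := by
  obtain ⟨T, u, y, hu, huT, hy, hn', hc⟩ := h
  have e1 := endb_eq y T
  have hx := walk_chg (sf s) u T hu
  rw [huT] at hx
  have := PP_core s (n+2) T u y y (fun t => sf s (u t)) hu huT (by simp) (by simp)
    (by simp [hu.1, hs, hy]) (by simp only [huT, hl]; rw [← e1, hn', hy]) (by omega) (by omega)
    (by omega) (by omega)
  rwa [hc, hy] at this

theorem PP_iii (s : List Bool) (a : Bool) (n c : ℕ) (h : PP s a n c) (hs : sf s 0 = a)
    (hl : sf s (s.length - 1) ≠ endb a n) (hn : n + 1 ≤ chg (sf s) (s.length - 1)) :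
    ∃ c' < c, PP s a (n+1) c' := by
  obtain ⟨T, u, y, hu, huT, hy, hn', hc⟩ := h
  have e1 := endb_eq y T
  have hx := walk_chg (sf s) u T hu
  rw [huT] at hx
  have hT : T ≠ 0 := by
    rintro rfl
    simp [chg] at hx; simp [← hx, chg] at hn
  let y0 : ℕ → Bool := fun t => if t = T then sf s (u t) else y t
  have hf := chg_flip y0 y T (by intro t ht; simp [y0, ht]) T
  simp [hT] at hf
  have p1 := chg_parity y0 T
  have p2 := chg_parity y T
  have hyT : y T ≠ sf s (u T) := by
    rw [huT, ← e1, hn', hy]; exact hl.symm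
  have q0 : y0 0 = y 0 := by simp [y0, hT.symm]
  have qT : y0 T = ! y T := by simp [y0]; revert hyT; cases y T <;> cases sf s (u T) <;> simp
  have par : (n+1) % 2 = chg y0 T % 2 := by
    rw [q0, qT] at p1
    rw [hn'] at p2
    cases hh : y 0 <;> cases hh' : y T <;> simp [hh, hh'] at p1 p2 <;> omega
  have := PP_core s (n+1) T u y y0 (fun t => sf s (u t)) hu huT
    (by intro t; by_cases h : t = T <;> simp [y0, h]) (by simp)
    (by simp [q0, hu.1, hs, hy]) (by simp [y0]) (by omega) (by omega) par (by omega)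
  rwa [hc, q0, hy] at this

theorem PP_ii (s : List Bool) (a : Bool) (n c : ℕ) (h : PP s (!a) n c) (hs : sf s 0 = a)
    (hn : n + 1 ≤ chg (sf s) (s.length - 1)) :
    ∃ c' < c, PP s a (n+1) c' := by
  obtain ⟨T, u, y, hu, huT, hy, hn', hc⟩ := h
  have hx := walk_chg (sf s) u T hu
  rw [huT] at hx
  have hT : T ≠ 0 := by
    rintro rfl
    simp [chg] at hx; simp [← hx, chg] at hn
  let y0 : ℕ → Bool := fun t => if t = 0 then sf s (u t) else y t
  let x0 : ℕ → Bool := fun t => if t = T then y t else sf s (u t)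
  have hf := chg_flip y0 y 0 (by intro t ht; simp [y0, ht]) T
  have hf' : chg y0 T ≤ n + 1 := by simp at hf; split_ifs at hf <;> omega
  have hg := chg_flip (fun t => sf s (u t)) x0 T (by intro t ht; simp [x0, ht]) T
  simp [hT] at hg
  have p1 := chg_parity y0 T
  have p2 := chg_parity y T
  have p3 := chg_parity x0 T
  have q0 : y0 0 = a := by simp [y0, hu.1, hs]
  have qT : y0 T = y T := by simp [y0, hT]
  have r0 : x0 0 = a := by simp [x0, hT.symm, hu.1, hs]
  have rT : x0 T = y T := by simp [x0]
  have par : (n+1) % 2 = chg y0 T % 2 := by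
    rw [q0, qT] at p1
    rw [hn', hy] at p2
    cases a <;> cases hh' : y T <;> simp [hh'] at p1 p2 <;> omega
  have par2 : chg x0 T % 2 = chg y0 T % 2 := by
    rw [p1, p3, r0, rT, q0, qT]
  have := PP_core s (n+1) T u y y0 x0 hu huT
    (by intro t; by_cases h : t = 0 <;> simp [y0, h])
    (by intro t; by_cases h : t = T <;> simp [x0, h])
    (by rw [q0, r0]) (by rw [qT, rT]) hf' (by omega) par (by omega)
  rwa [hc, q0] at this

def alt (a : Bool) (n : ℕ) : List Bool := (List.range (n+1)).map (endb a)

theorem alt_length (a : Bool) (n : ℕ) : (alt a n).length = n + 1 := by simp [alt]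

theorem alt_getD (a : Bool) (n i : ℕ) (h : i ≤ n) : (alt a n).getD i false = endb a i := by
  have : i < n + 1 := by omega
  simp [alt, List.getD_eq_getElem?_getD, this]

theorem endb_succ (a : Bool) (n : ℕ) : endb a (n+1) = ! endb a n := by
  unfold endb
  rcases Nat.mod_two_eq_zero_or_one n with h | h
  · have : (n+1) % 2 = 1 := by omega
    simp [h, this]
  · have : (n+1) % 2 = 0 := by omega
    simp [h, this]

theorem weak_path (x z : List Bool) (u v : ℕ → ℕ) (T : ℕ) (hu : Walk u T) (hv : Walk v T) :
    ∃ p : List (ℕ × ℕ), p.head? = some (0,0) ∧ p.getLast? = some (u T, v T) ∧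
      List.IsChain wpStep p ∧ (∀ q ∈ p, q.1 ≤ u T ∧ q.2 ≤ v T) ∧
      pathCost x z p ≤ hdc (fun t => sf x (u t)) (fun t => sf z (v t)) T := by
  induction T with
  | zero =>
    refine ⟨[(0,0)], ?_⟩
    simp [hu.1, hv.1, pathCost, hdc, sf]
  | succ T ih =>
    obtain ⟨p, h1, h2, h3, h4, h5⟩ := ih ⟨hu.1, fun t ht => hu.2 t (by omega)⟩
      ⟨hv.1, fun t ht => hv.2 t (by omega)⟩
    have eu := hu.2 T (by omega)
    have ev := hv.2 T (by omega)
    rw [hdc_succ]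
    by_cases hs : u (T+1) = u T ∧ v (T+1) = v T
    · exact ⟨p, h1, by rw [h2, hs.1, hs.2], h3, by rw [hs.1, hs.2]; exact h4, by omega⟩
    · refine ⟨p ++ [(u (T+1), v (T+1))], ?_, by simp, ?_, ?_, ?_⟩
      · simp [h1]
      · rw [List.isChain_append]
        refine ⟨h3, by simp, ?_⟩
        intro a ha b hb
        rw [h2] at ha
        simp at ha hb
        subst ha; subst hb
        unfold wpStep
        simp only
        omega
      · intro q hq
        rw [List.mem_append] at hq
        rcases hq with hq | hq
        · have := h4 q hq; omega
        · simp at hq; subst hq; simp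
      · simp only [pathCost, List.map_append, List.sum_append] at h5 ⊢
        simp only [List.map_cons, List.map_nil, List.sum_cons, List.sum_nil] at h5 ⊢
        exact Nat.add_le_add h5 (le_of_eq rfl)

theorem dtw_le (s : List Bool) (hs : s ≠ []) (a : Bool) (n c : ℕ) (h : PP s a n c) :
    dtwSq s (alt a n) ≤ c := by
  obtain ⟨T, u, y, hu, huT, hy, hn, hc⟩ := h
  have hmono : ∀ t ≤ T, chg y t ≤ n := by
    intro t ht
    rw [← hn]
    exact Finset.sum_le_sum_of_subset (Finset.range_mono ht)
  have hv : Walk (chg y) T := by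
    refine ⟨by simp [chg], ?_⟩
    intro t _
    rw [chg_succ]
    split_ifs <;> simp
  obtain ⟨p, h1, h2, h3, h4, h5⟩ := weak_path s (alt a n) u (chg y) T hu hv
  have hl : 0 < s.length := List.length_pos_iff.2 hs
  have : dtwSq s (alt a n) ≤ pathCost s (alt a n) p := by
    apply Nat.sInf_le
    refine ⟨p, ⟨h1, ?_, h3, ?_⟩, rfl⟩
    · rw [h2, huT, hn, alt_length]; simp
    · intro q hq
      have := h4 q hq
      rw [alt_length]
      omega
  refine this.trans (h5.trans (le_of_eq ?_))
  rw [← hc]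
  unfold hdc
  apply Finset.sum_congr rfl
  intro i hi
  have := Finset.mem_range.1 hi
  have e : sf (alt a n) (chg y i) = y i := by
    unfold sf
    rw [alt_getD _ _ _ (hmono i (by omega)), ← hy, endb_eq]
  simp [e]

theorem alt_chg (a : Bool) (n m : ℕ) (h : m ≤ n) : chg (sf (alt a n)) m = m := by
  induction m with
  | zero => simp [chg]
  | succ m ih =>
    rw [chg_succ, ih (by omega)]
    unfold sf
    rw [alt_getD _ _ _ h, alt_getD _ _ _ (by omega), endb_succ]
    simp

theorem sum_getD (f : ℕ × ℕ → ℕ) (p : List (ℕ × ℕ)) :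
    (p.map f).sum = ∑ i ∈ Finset.range p.length, f (p.getD i (0,0)) := by
  induction p with
  | nil => simp
  | cons a p ih => 
    rw [List.length_cons, Finset.sum_range_succ']
    simp [ih, add_comm]

theorem dtw_PP (s : List Bool) (hs : s ≠ []) (a : Bool) (n : ℕ) :
    PP s a n (dtwSq s (alt a n)) := by
  have hl : 0 < s.length := List.length_pos_iff.2 hs
  have hne : {c | ∃ p, IsWarpingPath s.length (alt a n).length p ∧ pathCost s (alt a n) p = c}.Nonempty := by
    have w : ∀ k T, Walk (fun t => min t k) T := by
      intro k T
      refine ⟨by simp, ?_⟩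
      intro t _
      simp only
      omega
    obtain ⟨p, h1, h2, h3, h4, h5⟩ := weak_path s (alt a n) _ _ (s.length + n) (w (s.length - 1) _) (w n _)
    refine ⟨_, p, ⟨h1, ?_, h3, ?_⟩, rfl⟩
    · rw [h2, alt_length]; simp
      omega
    · intro q hq
      have := h4 q hq
      rw [alt_length]
      omega
  obtain ⟨p, ⟨h1, h2, h3, h4⟩, h5⟩ := Nat.sInf_mem hne
  change _ = dtwSq s (alt a n) at h5
  rw [alt_length] at h2
  have hp : p ≠ [] := by rintro rfl; simp at h1
  have hpl : 0 < p.length := List.length_pos_iff.2 hp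
  have g0 : p.getD 0 (0,0) = (0,0) := by
    rw [List.getD_eq_getElem?_getD, ← List.head?_eq_getElem?, h1]; rfl
  have gT : p.getD (p.length - 1) (0,0) = (s.length - 1, n) := by
    rw [List.getD_eq_getElem?_getD, ← List.getLast?_eq_getElem?, h2]; rfl
  have hst : ∀ t < p.length - 1, wpStep (p.getD t (0,0)) (p.getD (t+1) (0,0)) := by
    intro t ht
    have := List.isChain_iff_getElem.1 h3 t (by omega)
    simpa [List.getD_eq_getElem?_getD, List.getElem?_eq_getElem (show t < p.length by omega),
      List.getElem?_eq_getElem (show t + 1 < p.length by omega)] using this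
  have wu : Walk (fun t => (p.getD t (0,0)).1) (p.length - 1) := by
    refine ⟨by simp only [g0], fun t ht => ?_⟩
    have := hst t ht
    unfold wpStep at this
    simp only
    omega
  have wv : Walk (fun t => (p.getD t (0,0)).2) (p.length - 1) := by
    refine ⟨by simp only [g0], fun t ht => ?_⟩
    have := hst t ht
    unfold wpStep at this
    simp only
    omega
  refine ⟨p.length - 1, _, fun t => sf (alt a n) (p.getD t (0,0)).2, wu, ?_, ?_, ?_, ?_⟩
  · simp only [gT]
  · simp only [g0]
    unfold sf
    rw [alt_getD _ _ _ (by omega)]; simp [endb]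
  · rw [walk_chg (sf (alt a n)) _ _ wv]
    simp only [gT]
    exact alt_chg a n n le_rfl
  · rw [← h5]
    unfold pathCost hdc
    rw [sum_getD, show p.length - 1 + 1 = p.length by omega]
    rfl

theorem condense_length (s : List Bool) (hs : s ≠ []) :
    (condense s).length = chg (sf s) (s.length - 1) + 1 := by
  induction s with
  | nil => exact absurd rfl hs
  | cons a s ih =>
    cases s with
    | nil => simp [condense, chg]
    | cons b r =>
      have ih := ih (by simp)
      have e : chg (sf (a :: b :: r)) ((a :: b :: r).length - 1)
          = chg (sf (b :: r)) ((b :: r).length - 1) + if a = b then 0 else 1 := by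
        simp only [List.length_cons, Nat.add_sub_cancel]
        unfold chg
        rw [Finset.sum_range_succ']
        simp [sf]
      rw [e]
      unfold condense
      by_cases h : a = b
      · simp only [h, if_true]; rw [ih]
      · rw [if_neg h, if_neg h, List.length_cons, ih]

theorem chain_alt (z : List Bool) (hz : z ≠ []) (hc : List.IsChain (· ≠ ·) z) :
    z = alt (sf z 0) (z.length - 1) := by
  have hl : 0 < z.length := List.length_pos_iff.2 hz
  apply List.ext_getElem
  · rw [alt_length]; omega
  · intro i hi hi'
    have key : ∀ i (hi : i < z.length), z[i] = endb (sf z 0) i := by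
      intro i
      induction i with
      | zero => intro hi; simp [endb, sf, List.getD_eq_getElem?_getD, hi]
      | succ i ih =>
        intro hi
        have h1 := ih (by omega)
        have h2 := List.isChain_iff_getElem.1 hc i (by omega)
        rw [endb_succ, ← h1]
        revert h2
        cases z[i] <;> cases z[i+1] <;> simp
    rw [key i hi]
    simp [alt]

theorem alt_ne (a : Bool) (n : ℕ) : alt a n ≠ [] := by
  intro h
  have := alt_length a n
  rw [h] at this; simp at this

theorem sf_head (s t : List Bool) (h : s.head? = t.head?) : sf s 0 = sf t 0 := by
  unfold sf
  rw [List.getD_eq_getElem?_getD, List.getD_eq_getElem?_getD, ← List.head?_eq_getElem?,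
    ← List.head?_eq_getElem?, h]

theorem sf_last (s t : List Bool) (h : s.getLast? = t.getLast?) :
    sf s (s.length - 1) = sf t (t.length - 1) := by
  unfold sf
  rw [List.getD_eq_getElem?_getD, List.getD_eq_getElem?_getD, ← List.getLast?_eq_getElem?,
    ← List.getLast?_eq_getElem?, h]

/-- for three binary strings sharing first and last symbols and
with condensation lengths `ℓ₁ ≤ ℓ₂ ≤ ℓ₃`, every condensed mean has length at
least `ℓ₂`. -/
theorem condensed_mean_of_three_length_lower_bound (s1 s2 s3 : List Bool)
    (h1 : s1 ≠ []) (h2 : s2 ≠ []) (h3 : s3 ≠ [])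
    (hf12 : s1.head? = s2.head?) (hf23 : s2.head? = s3.head?)
    (hl12 : s1.getLast? = s2.getLast?) (hl23 : s2.getLast? = s3.getLast?)
    (h12 : (condense s1).length ≤ (condense s2).length)
    (h23 : (condense s2).length ≤ (condense s3).length)
    (z : List Bool) (hzc : List.Chain' (· ≠ ·) z) (hz : IsMean [s1, s2, s3] z) :
    (condense s2).length ≤ z.length := by
  by_contra! hlt
  obtain ⟨hz0, hmin⟩ := hz
  have hl : 0 < z.length := List.length_pos_iff.2 hz0
  have hza := chain_alt z hz0 hzc
  rw [condense_length s1 h1, condense_length s2 h2] at h12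
  rw [condense_length s2 h2, condense_length s3 h3] at h23
  rw [condense_length s2 h2] at hlt
  generalize sf z 0 = a at hza
  obtain ⟨n, hn⟩ : ∃ n, n = z.length - 1 := ⟨_, rfl⟩
  rw [← hn] at hza
  have hf1 := sf_head _ _ hf12
  have hf3 := sf_head _ _ hf23
  have hl1 := sf_last _ _ hl12
  have hl3 := sf_last _ _ hl23
  have P1 := dtw_PP s1 h1 a n
  have P2 := dtw_PP s2 h2 a n
  have P3 := dtw_PP s3 h3 a n
  -- general conclusion
  have fin : ∀ b m c1 c2 c3, PP s1 b m c1 → PP s2 b m c2 → PP s3 b m c3 →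
      c1 + c2 + c3 < dtwSq s1 (alt a n) + dtwSq s2 (alt a n) + dtwSq s3 (alt a n) → False := by
    intro b m c1 c2 c3 q1 q2 q3 hlt'
    have r1 := dtw_le s1 h1 b m c1 q1
    have r2 := dtw_le s2 h2 b m c2 q2
    have r3 := dtw_le s3 h3 b m c3 q3
    have := hmin (alt b m) (alt_ne b m)
    rw [hza] at this
    simp only [Fobj, List.map_cons, List.map_nil, List.sum_cons, List.sum_nil] at this
    omega
  by_cases hs : sf s2 0 = a
  · by_cases he : sf s2 (s2.length - 1) = endb a n
    · have par : chg (sf s2) (s2.length - 1) % 2 = n % 2 := by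
        have e := endb_eq (sf s2) (s2.length - 1)
        rw [he, hs] at e
        revert e
        unfold endb
        rcases Nat.mod_two_eq_zero_or_one n with h | h <;>
          rcases Nat.mod_two_eq_zero_or_one (chg (sf s2) (s2.length - 1)) with h' | h' <;>
          cases a <;> simp [h, h']
      obtain ⟨c2, k2, q2⟩ := PP_i s2 a n _ P2 hs he (by omega)
      obtain ⟨c3, k3, q3⟩ := PP_i s3 a n _ P3 (by rw [← hf3, hs]) (by rw [← hl3, he]) (by omega)
      have q1 := PP_append s1 a _ _ (PP_append s1 a n _ P1)
      rw [hl1, he, endb_succ a (n+1), endb_succ a n] at q1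
      refine fin a (n+2) _ c2 c3 q1 q2 q3 ?_
      simp
      omega
    · obtain ⟨c2, k2, q2⟩ := PP_iii s2 a n _ P2 hs he (by omega)
      obtain ⟨c3, k3, q3⟩ := PP_iii s3 a n _ P3 (by rw [← hf3, hs]) (by rw [← hl3]; exact he)
        (by omega)
      have q1 := PP_append s1 a n _ P1
      have : sf s1 (s1.length - 1) = endb a (n+1) := by
        rw [hl1, endb_succ]
        revert he
        cases sf s2 (s2.length - 1) <;> cases endb a n <;> simp
      rw [if_pos this] at q1
      exact fin a (n+1) _ c2 c3 q1 q2 q3 (by omega)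
  · obtain ⟨b, rfl⟩ : ∃ b, a = !b := ⟨!a, by simp⟩
    have hs' : sf s2 0 = b := by
      revert hs; cases sf s2 0 <;> cases b <;> simp
    obtain ⟨c2, k2, q2⟩ := PP_ii s2 b n _ P2 hs' (by omega)
    obtain ⟨c3, k3, q3⟩ := PP_ii s3 b n _ P3 (by rw [← hf3, hs']) (by omega)
    have q1 := PP_prepend s1 b n _ P1 (by rw [hf1, hs'])
    exact fin b (n+1) _ c2 c3 q1 q2 q3 (by omega)
end

section
/- For all binary strings s_1, …, s_k there exists a condensed binary string z that minimizes the objective G(z) := max_{i ∈ [k]} dtw(s_i, z)² over all binary strings z (that is, the Binary DTW-Center problem always admits a condensed optimal solution). -/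
/-- The Binary DTW-Center objective `G(z) = maxᵢ dtw(sᵢ, z)²`. -/
noncomputable def Gobj (ss : List (List Bool)) (z : List Bool) : ℕ :=
  (ss.map fun s => dtwSq s z).foldr max 0

theorem aux_exists_path (m n : ℕ) : ∃ p, IsWarpingPath (m+1) (n+1) p := by
  induction m with
  | zero =>
    induction n with
    | zero => exact ⟨[(0,0)], by simp, by simp, List.isChain_singleton _, by simp⟩
    | succ n ih =>
      obtain ⟨p, h1, h2, h3, h4⟩ := ih
      refine ⟨p ++ [(0, n+1)], ?_, by simp, ?_, ?_⟩
      · simp [List.head?_append, h1]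
      · refine List.isChain_append.2 ⟨h3, by simp, ?_⟩
        intro x hx y hy
        rw [h2] at hx
        simp at hx hy
        subst hx; subst hy
        simp [wpStep]
      · intro q hq
        rcases List.mem_append.1 hq with h | h
        · have := h4 q h; omega
        · simp at h; subst h; simp
  | succ m ih =>
      obtain ⟨p, h1, h2, h3, h4⟩ := ih
      refine ⟨p ++ [(m+1, n)], ?_, by simp, ?_, ?_⟩
      · simp [List.head?_append, h1]
      · refine List.isChain_append.2 ⟨h3, by simp, ?_⟩
        intro x hx y hy
        rw [h2] at hx
        simp at hx hy
        subst hx; subst hy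
        simp [wpStep]
      · intro q hq
        rcases List.mem_append.1 hq with h | h
        · have := h4 q h; omega
        · simp at h; subst h; simp

theorem aux_dedup (g : ℕ × ℕ → ℕ) (p : List (ℕ × ℕ))
    (hp : List.IsChain (fun a b => wpStep a b ∨ b = a) p) :
    ∃ p' : List (ℕ × ℕ), p'.head? = p.head? ∧ p'.getLast? = p.getLast? ∧
      List.IsChain wpStep p' ∧ (∀ q ∈ p', q ∈ p) ∧ (p'.map g).sum ≤ (p.map g).sum := by
  induction p with
  | nil => exact ⟨[], by simp⟩
  | cons a t ih =>
    cases t with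
    | nil => exact ⟨[a], by simp⟩
    | cons b t =>
      rw [List.isChain_cons_cons] at hp
      obtain ⟨p', h1, h2, h3, h4, h5⟩ := ih hp.2
      rcases hp.1 with h | h
      · refine ⟨a :: p', by simp, ?_, ?_, ?_, ?_⟩
        · simp only [List.getLast?_cons, h2]
        · rw [List.isChain_cons]
          refine ⟨?_, h3⟩
          intro y hy
          rw [h1] at hy
          simp at hy
          subst hy; exact h
        · intro q hq
          rcases List.mem_cons.1 hq with h | h
          · simp [h]
          · exact List.mem_cons_of_mem _ (h4 q h)
        · simp only [List.map_cons, List.sum_cons] at h5 ⊢; omega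
      · subst h
        refine ⟨p', by simpa using h1, ?_, h3, ?_, ?_⟩
        · rw [h2]; simp [List.getLast?_cons]
        · intro q hq; exact List.mem_cons_of_mem _ (h4 q hq)
        · simp only [List.map_cons, List.sum_cons] at h5 ⊢; omega

theorem aux_condense (y : List Bool) (hy : y ≠ []) :
    ∃ (c : List Bool) (f : ℕ → ℕ), c ≠ [] ∧ List.IsChain (· ≠ ·) c ∧ c.head? = y.head? ∧
      f 0 = 0 ∧ f (y.length - 1) = c.length - 1 ∧
      (∀ j, j + 1 < y.length → f (j+1) = f j ∨ f (j+1) = f j + 1) ∧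
      (∀ j, j < y.length → f j < c.length ∧ y.getD j false = c.getD (f j) false) := by
  induction y with
  | nil => exact absurd rfl hy
  | cons a t ih =>
    cases t with
    | nil => exact ⟨[a], fun _ => 0, by simp⟩
    | cons b t =>
      obtain ⟨c, f, hc, h1, h2, h3, h4, h5, h6⟩ := ih (by simp)
      have hpos : 0 < c.length := List.length_pos_iff.2 hc
      by_cases hab : a = b
      · subst hab
        refine ⟨c, fun j => f (j - 1), hc, h1, by simpa using h2, by simpa using h3,
          by simpa using h4, ?_, ?_⟩
        · intro j hj
          cases j with
          | zero => left; rfl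
          | succ j => simpa using h5 j (by simpa using hj)
        · intro j hj
          cases j with
          | zero => simpa using h6 0 (by simp)
          | succ j => simpa using h6 j (by simpa using hj)
      · refine ⟨a :: c, fun j => if j = 0 then 0 else f (j - 1) + 1, by simp, ?_, by simp, by simp,
          ?_, ?_, ?_⟩
        · rw [List.isChain_cons]
          refine ⟨?_, h1⟩
          intro y hy
          rw [h2] at hy
          simp at hy
          subst hy; exact hab
        · simp at h4 ⊢; omega
        · intro j hj
          cases j with
          | zero => right; simp [h3]
          | succ j => simpa using h5 j (by simpa using hj)
        · intro j hj
          cases j with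
          | zero => simp
          | succ j => simpa using h6 j (by simpa using hj)

theorem aux_dtw (y : List Bool) (hy : y ≠ []) :
    ∃ c : List Bool, c ≠ [] ∧ List.IsChain (· ≠ ·) c ∧
      ∀ s : List Bool, s ≠ [] → dtwSq s c ≤ dtwSq s y := by
  obtain ⟨c, f, hc, h1, h2, h3, h4, h5, h6⟩ := aux_condense y hy
  refine ⟨c, hc, h1, fun s hs => ?_⟩
  have hsl : 0 < s.length := List.length_pos_iff.2 hs
  have hyl : 0 < y.length := List.length_pos_iff.2 hy
  have hne : {k | ∃ p, IsWarpingPath s.length y.length p ∧ pathCost s y p = k}.Nonempty := by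
    obtain ⟨p, hp⟩ := aux_exists_path (s.length - 1) (y.length - 1)
    rw [Nat.sub_add_cancel hsl, Nat.sub_add_cancel hyl] at hp
    exact ⟨_, p, hp, rfl⟩
  obtain ⟨p, ⟨p1, p2, p3, p4⟩, hcost⟩ := Nat.sInf_mem hne
  have hch : List.IsChain (fun a b => wpStep a b ∨ b = a)
      (p.map fun q : ℕ × ℕ => (q.1, f q.2)) := by
    rw [List.isChain_map]
    refine List.IsChain.imp_of_mem_imp ?_ p3
    rintro ⟨a, b⟩ ⟨a', b'⟩ ha hb hab
    have hb' := (p4 _ hb).2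
    simp only [wpStep, Prod.mk.injEq] at hab hb' ⊢
    rcases hab with ⟨e1, e2⟩ | ⟨e1, e2⟩ | ⟨e1, e2⟩ <;> subst e1 <;> subst e2
    · simp
    · have := h5 b hb'; omega
    · have := h5 b hb'; omega
  obtain ⟨p', q1, q2, q3, q4, q5⟩ := aux_dedup
    (fun q => if s.getD q.1 false = c.getD q.2 false then 0 else 1) _ hch
  have hle : pathCost s c p' ≤ pathCost s y p := by
    refine le_trans q5 (le_of_eq ?_)
    unfold pathCost
    rw [List.map_map]
    congr 1
    refine List.map_congr_left ?_
    intro q hq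
    simp only [Function.comp]
    rw [(h6 q.2 (p4 q hq).2).2]
  refine le_trans (Nat.sInf_le ⟨p', ⟨?_, ?_, q3, ?_⟩, rfl⟩) (hle.trans (le_of_eq hcost))
  · rw [q1, List.head?_map, p1]; simp [h3]
  · rw [q2, List.getLast?_map, p2]; simp [h4]
  · intro q hq
    obtain ⟨r, hr, rfl⟩ := List.mem_map.1 (q4 q hq)
    exact ⟨(p4 r hr).1, (h6 _ (p4 r hr).2).1⟩

theorem aux_G (ss : List (List Bool)) (c y : List Bool)
    (h : ∀ s ∈ ss, dtwSq s c ≤ dtwSq s y) : Gobj ss c ≤ Gobj ss y := by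
  induction ss with
  | nil => simp [Gobj]
  | cons a t ih =>
    have := ih fun s hs => h s (List.mem_cons_of_mem _ hs)
    simp only [Gobj, List.map_cons, List.foldr_cons] at this ⊢
    exact max_le_max (h a (by simp)) this

/-- Binary DTW-Center always admits a condensed optimal
solution. -/
theorem binary_dtw_center_condensed_solution (ss : List (List Bool))
    (hss : ss ≠ []) (hne : ∀ s ∈ ss, s ≠ []) :
    ∃ z : List Bool, z ≠ [] ∧ List.Chain' (· ≠ ·) z ∧
      ∀ w : List Bool, w ≠ [] → Gobj ss z ≤ Gobj ss w := by
  have hN : {k | ∃ w : List Bool, w ≠ [] ∧ Gobj ss w = k}.Nonempty := ⟨_, [true], by simp, rfl⟩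
  obtain ⟨y, hy, hyG⟩ := Nat.sInf_mem hN
  obtain ⟨c, hc, h1, h2⟩ := aux_dtw y hy
  refine ⟨c, hc, h1, fun w hw => ?_⟩
  exact (aux_G ss c y fun s hs => h2 s (hne s hs)).trans
    (hyG.le.trans (Nat.sInf_le ⟨w, hw, rfl⟩))
end
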